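/- Let q = r^2 with r an odd prime power. Suppose q − 1 = e_1 f_1 = e_2 f_2, there exists an integer l ≥ 2 with e_1 ≡ 2^l (mod 2^{l+1}) and 2^l | e_2, and that 2e_2 | e_1(r+1) and e_1 | e_2(r−1). Let s, t be integers with 1 ≤ s ≤ D_1 and 1 ≤ t ≤ D_2, and set n_1 = s·f_1 + t·f_2. If both the integer t·e_1(r+1)/(2e_2) + (r+1)/2 and n_1 are even, then for every integer k with 1 ≤ k ≤ n_1/2 − 1 there exists an [n_1, k] MDS self-orthogonal code over F_q, i.e., a linear code C ⊆ F_q^{n_1} with dim C = k, C ⊆ C⊥, and minimum Hamming distance n_1 − k + 1. -/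

import Mathlib

/-- The Euclidean dual of a linear code `C ⊆ F^n`. -/
def dualCode {F : Type*} [Field F] {n : ℕ} (C : Submodule F (Fin n → F)) :
    Submodule F (Fin n → F) where
  carrier := {x | ∀ c ∈ C, ∑ i, x i * c i = 0}
  add_mem' := by
    intro a b ha hb c hc
    simp only [Set.mem_setOf_eq] at ha hb ⊢
    simp [Pi.add_apply, add_mul, Finset.sum_add_distrib, ha c hc, hb c hc]
  zero_mem' := by intro c hc; simp
  smul_mem' := by
    intro r a ha c hc
    simp only [Set.mem_setOf_eq] at ha ⊢
    simp [Pi.smul_apply, smul_eq_mul, mul_assoc, ← Finset.mul_sum, ha c hc]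

/-- `C` has minimum Hamming distance `d`. -/
def IsMinDist {F : Type*} [Field F] [DecidableEq F] {n : ℕ}
    (C : Submodule F (Fin n → F)) (d : ℕ) : Prop :=
  (∀ c ∈ C, c ≠ 0 → d ≤ hammingNorm c) ∧ ∃ c ∈ C, c ≠ 0 ∧ hammingNorm c = d

/-!
Let `P` be a monic divisor of `T ^ (q - 1) - 1` over `F_q`, with roots `a₁, …, aₙ`. By Lagrange
interpolation `∑ aᵢ p(aᵢ) / P'(aᵢ) = 0` whenever `deg p < n - 2`; so if all values `aᵢ P'(aᵢ)` lie
in one square class, the generalized Reed–Solomon code on the `aᵢ` with multipliers `vᵢ`, where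
`vᵢ ^ 2` is a fixed multiple of `aᵢ / P'(aᵢ)`, is self-orthogonal.

Put `g = gcd(e₁, e₂)`. Take `s` roots `x` of `T ^ D₁ - 1` and `t` roots `y` of `T ^ D₂ + 1`, and let
`P = ∏ (T ^ f₁ - x) ∏ (T ^ f₂ - y)`. With `N = D₁ f₁ = D₂ f₂`, the two products divide `T ^ N - 1`
and `T ^ N + 1`, and `T ^ (2 N) - 1` divides `T ^ (q - 1) - 1` as `g` is even. In the first product
everything lives in `F_r`, all of whose elements are squares in `F_q`. The `y` are `(r + 1)`-st
roots of unity, and the square class of a difference `u - w` of two such roots is read off from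
`(u - w) ^ (r - 1) = -1 / (u w)`. The parity hypothesis makes the resulting signs agree on the
two sets of roots.
-/

section GeneralizedReedSolomon

open Polynomial

variable {F : Type*} [Field F] {n : ℕ}

/-- The encoder `p ↦ (v₁ p(a₁), …, vₙ p(aₙ))` of generalized Reed–Solomon codes, defined on all
polynomials. -/
noncomputable def grsEncoder (a v : Fin n → F) : F[X] →ₗ[F] (Fin n → F) :=
  LinearMap.pi fun i => v i • leval (a i)

/-- The generalized Reed–Solomon code `GRS_k(a, v)`, whose evaluation points are the `a i` and
whose column multipliers are the `v i`. -/
noncomputable def grsCode (a v : Fin n → F) (k : ℕ) : Submodule F (Fin n → F) :=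
  (degreeLT F k).map (grsEncoder a v)

theorem grsEncoder_apply (a v : Fin n → F) (p : F[X]) (i : Fin n) :
    grsEncoder a v p i = v i * p.eval (a i) := rfl

theorem mul_mem_degreeLT {p p' : F[X]} {k : ℕ} (hp : p ∈ degreeLT F k) (hp' : p' ∈ degreeLT F k) :
    p * p' ∈ degreeLT F (2 * k - 1) := by
  rcases eq_or_ne p 0 with rfl | hp0
  · simp
  rcases eq_or_ne p' 0 with rfl | hp0'
  · simp
  rw [mem_degreeLT, ← natDegree_lt_iff_degree_lt ‹_›] at hp hp'
  rw [mem_degreeLT, ← natDegree_lt_iff_degree_lt (mul_ne_zero hp0 hp0'), natDegree_mul hp0 hp0']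
  lia

theorem grsCode_le_dualCode {a v : Fin n → F} {k : ℕ}
    (h : ∀ p ∈ degreeLT F (2 * k - 1), ∑ i, v i ^ 2 * p.eval (a i) = 0) :
    grsCode a v k ≤ dualCode (grsCode a v k) := by
  rintro _ ⟨p, hp, rfl⟩ _ ⟨p', hp', rfl⟩
  rw [← h _ (mul_mem_degreeLT hp hp')]
  refine Finset.sum_congr rfl fun i _ => ?_
  rw [grsEncoder_apply, grsEncoder_apply, eval_mul]
  ring

variable [DecidableEq F] {a v : Fin n → F} {k : ℕ}

theorem hammingNorm_grsEncoder_add_card_zeros (hv : ∀ i, v i ≠ 0) (p : F[X]) :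
    hammingNorm (grsEncoder a v p) + Finset.card {i | p.eval (a i) = 0} = n := by
  simp [hammingNorm, grsEncoder_apply, hv, add_comm, Finset.card_filter_add_card_filter_not]

theorem le_hammingNorm_grsEncoder_add_natDegree (ha : Function.Injective a) (hv : ∀ i, v i ≠ 0)
    {p : F[X]} (hp : p ≠ 0) : n ≤ hammingNorm (grsEncoder a v p) + p.natDegree := by
  have card_zeros : Finset.card {i | p.eval (a i) = 0} ≤ p.natDegree := by
    rw [← Finset.card_image_of_injective _ ha]
    refine card_le_degree_of_subset_roots fun x hx => ?_
    obtain ⟨i, hi, rfl⟩ : ∃ i ∈ ({i | p.eval (a i) = 0} : Finset (Fin n)), a i = x :=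
      Finset.mem_image.1 hx
    exact (mem_roots hp).2 (Finset.mem_filter.1 hi).2
  have := hammingNorm_grsEncoder_add_card_zeros (a := a) hv p
  lia

omit [DecidableEq F] in
theorem finrank_grsCode (ha : Function.Injective a) (hv : ∀ i, v i ≠ 0) (hk : k ≤ n) :
    Module.finrank F (grsCode a v k) = k := by
  classical
  have disjoint_ker : Disjoint (degreeLT F k) (LinearMap.ker (grsEncoder a v)) := by
    refine Submodule.disjoint_def.2 fun p hp hker => by_contra fun hp0 => ?_
    have hdeg := (natDegree_lt_iff_degree_lt hp0).2 (mem_degreeLT.1 hp)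
    have := le_hammingNorm_grsEncoder_add_natDegree ha hv hp0
    rw [LinearMap.mem_ker.1 hker, hammingNorm_zero] at this
    lia
  rw [grsCode, ← LinearMap.range_domRestrict, LinearMap.finrank_range_of_inj
    (LinearMap.injective_domRestrict_iff.2 disjoint_ker), (degreeLTEquiv F k).finrank_eq,
    Module.finrank_fin_fun]

theorem isMinDist_grsCode (ha : Function.Injective a) (hv : ∀ i, v i ≠ 0) (hk1 : 1 ≤ k)
    (hk : k ≤ n) : IsMinDist (grsCode a v k) (n - k + 1) := by
  refine ⟨?_, ?_⟩
  · rintro _ ⟨p, hp, rfl⟩ hne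
    have hp0 : p ≠ 0 := fun h => hne (by rw [h, map_zero])
    have hdeg := (natDegree_lt_iff_degree_lt hp0).2 (mem_degreeLT.1 hp)
    have := le_hammingNorm_grsEncoder_add_natDegree ha hv hp0
    lia
  · obtain ⟨s, -, hs⟩ := Finset.exists_subset_card_eq (s := (Finset.univ : Finset (Fin n)))
      (n := k - 1) (by rw [Finset.card_univ, Fintype.card_fin]; lia)
    have hne : (Lagrange.nodal s a : F[X]) ≠ 0 := Lagrange.nodal_ne_zero
    have hle := le_hammingNorm_grsEncoder_add_natDegree ha hv hne
    rw [Lagrange.natDegree_nodal, hs] at hle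
    have zeros : s ⊆ ({i | (Lagrange.nodal s a).eval (a i) = 0} : Finset (Fin n)) := fun i hi =>
      Finset.mem_filter.2 ⟨Finset.mem_univ i, Lagrange.eval_nodal_at_node hi⟩
    have hge := hammingNorm_grsEncoder_add_card_zeros (a := a) hv (Lagrange.nodal s a)
    have hcard := Finset.card_le_card zeros
    refine ⟨grsEncoder a v (Lagrange.nodal s a), ⟨_, ?_, rfl⟩, ?_, by lia⟩
    · rw [SetLike.mem_coe, mem_degreeLT, Lagrange.degree_nodal, hs]
      exact_mod_cast (by lia : k - 1 < k)
    · exact hammingNorm_ne_zero_iff.1 (by lia)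

end GeneralizedReedSolomon

/-- There is an `[n, k]` MDS code over `F` that is self-orthogonal for the Euclidean product. -/
def HasSelfOrthogonalMDSCode (F : Type*) [Field F] [DecidableEq F] (n k : ℕ) : Prop :=
  ∃ C : Submodule F (Fin n → F),
    Module.finrank F C = k ∧ C ≤ dualCode C ∧ IsMinDist C (n - k + 1)

section Nodal

open Polynomial

variable {F : Type*} [Field F] {S : Finset F}

theorem sum_eval_div_eval_derivative_nodal {p : F[X]} (hp : p ∈ degreeLT F (S.card - 1)) :
    ∑ x ∈ S, p.eval x / (derivative (Lagrange.nodal S id)).eval x = 0 := by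
  classical
  rw [mem_degreeLT] at hp
  rw [← coeff_eq_zero_of_degree_lt hp, Lagrange.coeff_eq_sum (s := S) Function.injective_id.injOn
    (hp.trans_le (by exact_mod_cast Nat.sub_le _ _))]
  refine Finset.sum_congr rfl fun x hx => ?_
  have := Lagrange.eval_nodal_derivative_eval_node_eq (v := id) hx
  rw [Lagrange.eval_nodal] at this
  exact congrArg (p.eval x / ·) this

theorem eval_derivative_nodal_ne_zero {x : F} (hx : x ∈ S) :
    (derivative (Lagrange.nodal S id)).eval x ≠ 0 := by
  classical
  have := Lagrange.eval_nodal_derivative_eval_node_eq (v := id) hx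
  rw [id_eq] at this
  rw [this]
  exact Lagrange.eval_nodal_not_at_node fun y hy => (Finset.ne_of_mem_erase hy).symm

theorem hasSelfOrthogonalMDSCode_card_of_isSquare [DecidableEq F] {c : F} {k : ℕ} (hS : 0 ∉ S)
    (hc : c ≠ 0)
    (hsq : ∀ x ∈ S, IsSquare (c * (x * (derivative (Lagrange.nodal S id)).eval x)))
    (hk1 : 1 ≤ k) (hk : 2 * k < S.card) : HasSelfOrthogonalMDSCode F S.card k := by
  set D : F → F := fun x => (derivative (Lagrange.nodal S id)).eval x
  have hD0 : ∀ x ∈ S, D x ≠ 0 := fun x hx => eval_derivative_nodal_ne_zero hx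
  have exists_multiplier : ∀ x ∈ S, ∃ v, v ≠ 0 ∧ v ^ 2 = c * x / D x := by
    intro x hx
    obtain ⟨w, hw⟩ := hsq x hx
    have hx0 : x ≠ 0 := ne_of_mem_of_not_mem hx hS
    have hv2 : (w / D x) ^ 2 = c * x / D x := by
      rw [div_pow, pow_two w, ← hw, ← mul_assoc, pow_two, mul_div_mul_right _ _ (hD0 x hx)]
    refine ⟨w / D x, ?_, hv2⟩
    rw [← pow_ne_zero_iff two_ne_zero, hv2]
    exact div_ne_zero (mul_ne_zero hc hx0) (hD0 x hx)
  choose! v hv0 hv2 using exists_multiplier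
  let e := S.equivFin.symm
  have ha : Function.Injective fun i => (e i : F) := Subtype.val_injective.comp e.injective
  have hv : ∀ i, v (e i) ≠ 0 := fun i => hv0 _ (e i).2
  refine ⟨grsCode (fun i => (e i : F)) (fun i => v (e i)) k, finrank_grsCode ha hv (by lia),
    grsCode_le_dualCode fun p hp => ?_, isMinDist_grsCode ha hv hk1 (by lia)⟩
  have hXp : C c * X * p ∈ degreeLT F (S.card - 1) := by
    rcases eq_or_ne p 0 with rfl | hp0
    · simp
    rw [mem_degreeLT, ← natDegree_lt_iff_degree_lt hp0] at hp
    rw [mem_degreeLT, degree_mul, degree_C_mul_X hc, degree_eq_natDegree hp0]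
    exact_mod_cast (by lia : 1 + p.natDegree < S.card - 1)
  calc ∑ i, v (e i) ^ 2 * p.eval (e i : F)
      = ∑ x ∈ S, v x ^ 2 * p.eval x := by
        rw [← Finset.sum_coe_sort S, ← Equiv.sum_comp e]
    _ = ∑ x ∈ S, (C c * X * p).eval x / D x := Finset.sum_congr rfl fun x hx => by
        rw [hv2 x hx, eval_mul, eval_mul, eval_C, eval_X]; ring
    _ = 0 := sum_eval_div_eval_derivative_nodal hXp

end Nodal

section FiniteField

open Polynomial

variable {F : Type*} [Field F] [Fintype F] {P : F[X]}

theorem separable_X_pow_card_sub_one_sub_one :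
    (X ^ (Fintype.card F - 1) - 1 : F[X]).Separable := by
  rw [X_pow_sub_one_separable_iff, Nat.cast_sub Fintype.card_pos, Nat.cast_card_eq_zero]
  simp

theorem splits_X_pow_card_sub_one_sub_one : (X ^ (Fintype.card F - 1) - 1 : F[X]).Splits := by
  refine (Nat.card_eq_fintype_card (α := F) ▸ splits_X_pow_nat_card_sub_X (K := F)).of_dvd
    (FiniteField.X_pow_card_sub_X_ne_zero F Fintype.one_lt_card) ⟨X, ?_⟩
  rw [sub_mul, one_mul, ← pow_succ, Nat.sub_add_cancel Fintype.card_pos]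

theorem eq_nodal_roots_of_dvd [DecidableEq F] (hP : P.Monic)
    (h : P ∣ X ^ (Fintype.card F - 1) - 1) : P = Lagrange.nodal P.roots.toFinset id := by
  have hsplits : P.Splits := splits_X_pow_card_sub_one_sub_one.of_dvd
    separable_X_pow_card_sub_one_sub_one.ne_zero h
  have hnodup : P.roots.Nodup := nodup_roots (separable_X_pow_card_sub_one_sub_one.of_dvd h)
  conv_lhs => rw [hsplits.eq_prod_roots_of_monic hP]
  rw [Lagrange.nodal_eq, Finset.prod, Multiset.toFinset_val, hnodup.dedup]
  rfl

theorem ne_zero_of_isRoot_of_dvd {a : F} (h : P ∣ X ^ (Fintype.card F - 1) - 1)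
    (ha : P.IsRoot a) : a ≠ 0 := by
  rintro rfl
  have := ha.dvd h
  simp [Nat.sub_ne_zero_of_lt (Fintype.one_lt_card (α := F))] at this

theorem eval_derivative_ne_zero_of_dvd {a : F} (h : P ∣ X ^ (Fintype.card F - 1) - 1)
    (ha : P.IsRoot a) : (derivative P).eval a ≠ 0 := by
  simpa using (separable_X_pow_card_sub_one_sub_one.of_dvd h).aeval_derivative_ne_zero
    (x := a) (by simpa using ha)

theorem exists_nodal_dvd_of_dvd {s : ℕ} (hP : P.Monic) (h : P ∣ X ^ (Fintype.card F - 1) - 1)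
    (hs : s ≤ P.natDegree) : ∃ S : Finset F, S.card = s ∧ Lagrange.nodal S id ∣ P := by
  classical
  have hnodal := eq_nodal_roots_of_dvd hP h
  rw [hnodal, Lagrange.natDegree_nodal] at hs
  obtain ⟨S, hS, hcard⟩ := Finset.exists_subset_card_eq hs
  refine ⟨S, hcard, ?_⟩
  rw [hnodal]
  exact Finset.prod_dvd_prod_of_subset _ _ _ hS

theorem hasSelfOrthogonalMDSCode_natDegree_of_dvd [DecidableEq F] {ε : ℤ} {k : ℕ} (hP : P.Monic)
    (h : P ∣ X ^ (Fintype.card F - 1) - 1)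
    (hε : ∀ a, P.IsRoot a → quadraticChar F (a * (derivative P).eval a) = ε)
    (hk1 : 1 ≤ k) (hk : 2 * k < P.natDegree) : HasSelfOrthogonalMDSCode F P.natDegree k := by
  set S := P.roots.toFinset
  have hnodal : P = Lagrange.nodal S id := eq_nodal_roots_of_dvd hP h
  have hcard : P.natDegree = S.card := by rw [hnodal, Lagrange.natDegree_nodal]
  have isRoot_of_mem : ∀ a ∈ S, P.IsRoot a := fun a ha =>
    isRoot_of_mem_roots (Multiset.mem_toFinset.1 ha)
  have hne : ∀ a ∈ S, a * (derivative P).eval a ≠ 0 := fun a ha =>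
    mul_ne_zero (ne_zero_of_isRoot_of_dvd h (isRoot_of_mem a ha))
      (eval_derivative_ne_zero_of_dvd h (isRoot_of_mem a ha))
  obtain ⟨b, hb⟩ : S.Nonempty := Finset.card_pos.1 (by lia)
  rw [hcard] at hk ⊢
  refine hasSelfOrthogonalMDSCode_card_of_isSquare (c := b * (derivative P).eval b)
    (fun h0 => ne_zero_of_isRoot_of_dvd h (isRoot_of_mem 0 h0) rfl) (hne b hb)
    (fun a ha => ?_) hk1 hk
  rw [← hnodal, ← quadraticChar_one_iff_isSquare (mul_ne_zero (hne b hb) (hne a ha)), map_mul,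
    hε a (isRoot_of_mem a ha), ← hε b (isRoot_of_mem b hb), ← pow_two,
    quadraticChar_sq_one (hne b hb)]

end FiniteField

section QuadraticChar

theorem pow_two_mul_eq_one_of_pow_eq_neg_one_pow {M : Type*} [Monoid M] [HasDistribNeg M] {z : M}
    {h j : ℕ} (hz : z ^ h = (-1) ^ j) : z ^ (2 * h) = 1 := by
  rw [mul_comm, pow_mul, hz, pow_right_comm, neg_one_sq, one_pow]

theorem sq_div_two_eq {r h : ℕ} (hr : r + 1 = 2 * h) : r ^ 2 / 2 = (r - 1) * h := by
  obtain ⟨j, rfl⟩ : ∃ j, r = 2 * j + 1 := ⟨h - 1, by lia⟩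
  obtain rfl : h = j + 1 := by lia
  rw [Nat.add_sub_cancel]
  have : (2 * j + 1) ^ 2 = 2 * (2 * j * (j + 1)) + 1 := by ring
  lia

variable {F : Type*} [Field F] [Fintype F] {r h : ℕ}

theorem exists_ringHom_apply_eq_pow (hr : r ∣ Fintype.card F) :
    ∃ φ : F →+* F, ∀ x, φ x = x ^ r := by
  obtain ⟨p, _, n, hp, hcard⟩ := FiniteField.card' F
  obtain ⟨m, -, rfl⟩ := (Nat.dvd_prime_pow hp).1 (hcard ▸ hr)
  have : Fact p.Prime := ⟨hp⟩
  exact ⟨iterateFrobenius F p m, iterateFrobenius_def p m⟩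

theorem isSquare_of_pow_eq_one {m : ℕ} {u : F} (hm : m ∣ Fintype.card F / 2) (hu : u ^ m = 1) :
    IsSquare u := by
  by_cases hchar : ringChar F = 2
  · exact FiniteField.isSquare_of_char_two hchar u
  rcases eq_or_ne u 0 with rfl | hu0
  · exact IsSquare.zero
  obtain ⟨j, hj⟩ := hm
  rw [FiniteField.isSquare_iff hchar hu0, hj, pow_mul, hu, one_pow]

theorem sub_pow_mul_eq_neg_one {u w : F} (hr : r ∣ Fintype.card F) (huw : u ≠ w)
    (hu : u ^ (r + 1) = 1) (hw : w ^ (r + 1) = 1) : (u - w) ^ (r - 1) * (u * w) = -1 := by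
  obtain ⟨φ, hφ⟩ := exists_ringHom_apply_eq_pow hr
  have hr0 : 0 < r := Nat.pos_of_dvd_of_pos hr Fintype.card_pos
  have sub_pow : (u - w) ^ r = u ^ r - w ^ r := by rw [← hφ, map_sub, hφ, hφ]
  refine mul_right_cancel₀ (sub_ne_zero.2 huw) ?_
  calc (u - w) ^ (r - 1) * (u * w) * (u - w)
      = (u - w) ^ (r - 1 + 1) * (u * w) := by ring
    _ = u ^ (r + 1) * w - w ^ (r + 1) * u := by rw [Nat.sub_add_cancel hr0, sub_pow]; ring
    _ = -1 * (u - w) := by rw [hu, hw]; ring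

theorem ringChar_ne_two_of_card_eq_sq (hF : Fintype.card F = r ^ 2) (hr : Odd r) :
    ringChar F ≠ 2 := by
  rw [Ne, FiniteField.even_card_iff_char_two, hF, ← Nat.even_iff, Nat.even_pow]
  exact fun h => Nat.not_even_iff_odd.2 hr h.1

variable [DecidableEq F]

theorem quadraticChar_eq_neg_one_pow_iff {x : F} {n : ℕ} (hF : ringChar F ≠ 2) :
    quadraticChar F x = (-1) ^ n ↔ x ^ (Fintype.card F / 2) = (-1) ^ n := by
  rw [← quadraticChar_eq_pow_of_char_ne_two' hF]
  refine ⟨fun h => by rw [h]; norm_cast, fun h => ?_⟩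
  refine Int.cast_injOn_of_ringChar_ne_two hF (quadraticChar_isQuadratic F x) ?_ (by
    rw [h]; norm_cast)
  rcases neg_one_pow_eq_or ℤ n with h1 | h1 <;> simp [h1]

variable (hF : Fintype.card F = r ^ 2) (hr : r + 1 = 2 * h)
include hF hr

theorem quadraticChar_eq_one_of_pow_eq_self {x : F} (hx0 : x ≠ 0) (hx : x ^ r = x) :
    quadraticChar F x = 1 := by
  rw [quadraticChar_one_iff_isSquare hx0]
  refine isSquare_of_pow_eq_one (m := r - 1) ⟨h, by rw [hF, sq_div_two_eq hr]⟩
    (mul_right_cancel₀ hx0 ?_)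
  rw [← pow_succ, Nat.sub_add_cancel (by lia), hx, one_mul]

theorem quadraticChar_natCast_eq_one {n : ℕ} (hn : (n : F) ≠ 0) : quadraticChar F n = 1 := by
  obtain ⟨φ, hφ⟩ := exists_ringHom_apply_eq_pow (F := F) (hF ▸ dvd_pow_self r two_ne_zero)
  exact quadraticChar_eq_one_of_pow_eq_self hF hr hn (by rw [← hφ, map_natCast])

theorem quadraticChar_eval_nodal_eq_one {S : Finset F} {x : F} (hS : ∀ y ∈ S, y ^ r = y)
    (hx : x ^ r = x) (hne : (Lagrange.nodal S id).eval x ≠ 0) :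
    quadraticChar F ((Lagrange.nodal S id).eval x) = 1 := by
  obtain ⟨φ, hφ⟩ := exists_ringHom_apply_eq_pow (F := F) (hF ▸ dvd_pow_self r two_ne_zero)
  refine quadraticChar_eq_one_of_pow_eq_self hF hr hne ?_
  rw [Lagrange.eval_nodal, ← hφ, map_prod]
  exact Finset.prod_congr rfl fun y hy => by rw [map_sub, hφ, hφ, hx, id_eq, hS y hy]

theorem quadraticChar_eq_one_of_pow_eq_neg_one_pow {y : F} {j : ℕ} (hy : y ^ h = (-1) ^ j) :
    quadraticChar F y = 1 := by
  have hy1 := pow_two_mul_eq_one_of_pow_eq_neg_one_pow hy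
  have hy0 : y ≠ 0 := fun hy0 => by simp [hy0, show h ≠ 0 by lia] at hy1
  rw [quadraticChar_one_iff_isSquare hy0]
  refine isSquare_of_pow_eq_one ⟨(r - 1) / 2, ?_⟩ hy1
  rw [hF, sq_div_two_eq hr, mul_comm 2 h, mul_assoc, Nat.mul_div_cancel' (by lia), mul_comm]

theorem quadraticChar_sub {u w : F} {i j : ℕ} (huw : u ≠ w) (hu : u ^ h = (-1) ^ i)
    (hw : w ^ h = (-1) ^ j) : quadraticChar F (u - w) = (-1) ^ (h + i + j) := by
  have hchar := ringChar_ne_two_of_card_eq_sq hF ⟨h - 1, by lia⟩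
  have key : ((u - w) ^ (r - 1) * (u * w)) ^ h = (-1) ^ h := by
    rw [sub_pow_mul_eq_neg_one (hF ▸ dvd_pow_self r two_ne_zero) huw
      (hr ▸ pow_two_mul_eq_one_of_pow_eq_neg_one_pow hu)
      (hr ▸ pow_two_mul_eq_one_of_pow_eq_neg_one_pow hw)]
  rw [mul_pow, mul_pow, hu, hw, ← pow_add, ← pow_mul] at key
  rw [quadraticChar_eq_neg_one_pow_iff hchar, hF, sq_div_two_eq hr]
  calc (u - w) ^ ((r - 1) * h)
      = (u - w) ^ ((r - 1) * h) * (-1) ^ (i + j) * (-1) ^ (i + j) := by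
        rw [mul_assoc, ← mul_pow, neg_one_mul, neg_neg, one_pow, mul_one]
    _ = (-1) ^ (h + i + j) := by rw [key, ← pow_add, add_assoc]

theorem quadraticChar_eval_nodal {S : Finset F} {z : F} {i j : ℕ} (hz : z ^ h = (-1) ^ i)
    (hS : ∀ y ∈ S, y ^ h = (-1) ^ j) (hne : (Lagrange.nodal S id).eval z ≠ 0) :
    quadraticChar F ((Lagrange.nodal S id).eval z) = (-1) ^ ((h + i + j) * S.card) := by
  rw [Lagrange.eval_nodal] at hne ⊢
  rw [map_prod, pow_mul, ← Finset.prod_const]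
  exact Finset.prod_congr rfl fun y hy => quadraticChar_sub hF hr
    (sub_ne_zero.1 (Finset.prod_ne_zero_iff.1 hne y hy)) hz (hS y hy)

end QuadraticChar

section NodalCompPow

open Polynomial

theorem eval_derivative_comp_X_pow_mul {R : Type*} [CommRing R] {p Q : R[X]} {a : R} {f : ℕ}
    (ha : p.eval (a ^ f) = 0) :
    a * (derivative (p.comp (X ^ f) * Q)).eval a =
      f * (a ^ f * (derivative p).eval (a ^ f)) * Q.eval a := by
  rcases eq_or_ne f 0 with rfl | hf
  · rw [pow_zero] at ha
    simp [ha]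
  obtain ⟨m, rfl⟩ : ∃ m, f = m + 1 := Nat.exists_eq_succ_of_ne_zero hf
  simp only [derivative_mul, derivative_comp, derivative_X_pow, eval_add, eval_mul, eval_comp,
    eval_pow, eval_X, ha, eval_natCast, Nat.add_sub_cancel, C_eq_natCast]
  ring

variable {F : Type*} [Field F]

/-- The polynomial `∏_{x ∈ S} (T ^ f - x)`, whose roots are the preimages of the points of `S`
under `a ↦ a ^ f`. -/
noncomputable def nodalCompPow (S : Finset F) (f : ℕ) : F[X] :=
  (Lagrange.nodal S id).comp (X ^ f)

variable {S : Finset F} {f : ℕ}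

theorem eval_nodalCompPow (a : F) :
    (nodalCompPow S f).eval a = (Lagrange.nodal S id).eval (a ^ f) := by
  rw [nodalCompPow, eval_comp, eval_pow, eval_X]

theorem isRoot_nodalCompPow {a : F} : (nodalCompPow S f).IsRoot a ↔ a ^ f ∈ S := by
  rw [IsRoot.def, eval_nodalCompPow, Lagrange.eval_nodal, Finset.prod_eq_zero_iff]
  simp [sub_eq_zero]

theorem monic_nodalCompPow (hf : f ≠ 0) : (nodalCompPow S f).Monic :=
  Lagrange.nodal_monic.comp (monic_X_pow f) (by rwa [natDegree_X_pow])

theorem natDegree_nodalCompPow : (nodalCompPow S f).natDegree = S.card * f := by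
  rw [nodalCompPow, natDegree_comp, Lagrange.natDegree_nodal, natDegree_X_pow]

theorem pow_eq_of_mem_of_nodal_dvd {D : ℕ} {c x : F} (h : Lagrange.nodal S id ∣ X ^ D - C c)
    (hx : x ∈ S) : x ^ D = c := by
  have hroot : (X ^ D - C c).IsRoot x :=
    IsRoot.dvd (Lagrange.eval_nodal_at_node (v := id) hx) h
  simpa [sub_eq_zero] using hroot

theorem nodalCompPow_dvd {D : ℕ} {c : F} (h : Lagrange.nodal S id ∣ X ^ D - C c) :
    nodalCompPow S f ∣ X ^ (D * f) - C c := by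
  simpa [pow_mul', nodalCompPow] using map_dvd (compRingHom (X ^ f)) h

theorem nodalCompPow_mul_nodalCompPow_dvd {T : Finset F} {D₁ D₂ f₁ f₂ n : ℕ}
    (hS : Lagrange.nodal S id ∣ X ^ D₁ - C 1) (hT : Lagrange.nodal T id ∣ X ^ D₂ - C (-1))
    (hN : D₁ * f₁ = D₂ * f₂) (hdvd : D₁ * f₁ * 2 ∣ n) :
    nodalCompPow S f₁ * nodalCompPow T f₂ ∣ X ^ n - 1 := by
  refine (mul_dvd_mul (nodalCompPow_dvd hS) (hN ▸ nodalCompPow_dvd hT)).trans ?_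
  have hfactor : (X ^ (D₁ * f₁) - C 1) * (X ^ (D₁ * f₁) - C (-1)) =
      (X ^ (D₁ * f₁ * 2) - 1 : F[X]) := by
    rw [C_neg, C_1]; ring
  exact hfactor ▸ dvd_pow_sub_one_of_dvd hdvd

variable [Fintype F] [DecidableEq F] {r h : ℕ}

theorem quadraticChar_mul_eval_derivative_nodalCompPow_mul (hF : Fintype.card F = r ^ 2)
    (hr : r + 1 = 2 * h) {Q : F[X]} {a : F} (ha : a ^ f ∈ S)
    (hne : a * (derivative (nodalCompPow S f * Q)).eval a ≠ 0) :
    quadraticChar F (a * (derivative (nodalCompPow S f * Q)).eval a) =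
      quadraticChar F (a ^ f) *
        quadraticChar F ((Lagrange.nodal (S.erase (a ^ f)) id).eval (a ^ f)) *
          quadraticChar F (Q.eval a) := by
  have hprod := eval_derivative_comp_X_pow_mul (Q := Q) (Lagrange.eval_nodal_at_node (v := id) ha)
  have hnode := Lagrange.eval_nodal_derivative_eval_node_eq (v := id) ha
  simp only [id_eq] at hprod hnode
  rw [nodalCompPow] at hne ⊢
  rw [hprod] at hne
  rw [hprod, map_mul, map_mul, map_mul, hnode, quadraticChar_natCast_eq_one hF hr
    (left_ne_zero_of_mul (left_ne_zero_of_mul hne)), one_mul]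

variable {T : Finset F} {f₁ f₂ i j : ℕ} {a : F}

theorem quadraticChar_mul_eval_derivative_of_pow_mem_left (hF : Fintype.card F = r ^ 2)
    (hr : r + 1 = 2 * h) (hS : ∀ x ∈ S, x ^ r = x) (hT : ∀ y ∈ T, y ^ h = (-1) ^ j)
    (ha₁ : a ^ f₁ ∈ S) (ha₂ : (a ^ f₂) ^ h = (-1) ^ i)
    (hne : a * (derivative (nodalCompPow S f₁ * nodalCompPow T f₂)).eval a ≠ 0) :
    quadraticChar F (a * (derivative (nodalCompPow S f₁ * nodalCompPow T f₂)).eval a) =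
      (-1) ^ ((h + i + j) * T.card) := by
  have hprod := quadraticChar_mul_eval_derivative_nodalCompPow_mul hF hr ha₁ hne
  rw [Ne, ← quadraticChar_eq_zero_iff, hprod] at hne
  simp only [mul_eq_zero, quadraticChar_eq_zero_iff, not_or, eval_nodalCompPow] at hne
  obtain ⟨⟨hx, hnode⟩, hother⟩ := hne
  rw [hprod, eval_nodalCompPow, quadraticChar_eval_nodal hF hr ha₂ hT hother,
    quadraticChar_eq_one_of_pow_eq_self hF hr hx (hS _ ha₁), one_mul,
    quadraticChar_eval_nodal_eq_one hF hr (fun y hy => hS y (Finset.mem_of_mem_erase hy))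
      (hS _ ha₁) hnode, one_mul]

theorem quadraticChar_mul_eval_derivative_of_pow_mem_right (hF : Fintype.card F = r ^ 2)
    (hr : r + 1 = 2 * h) (hS : ∀ x ∈ S, x ^ r = x) (hT : ∀ y ∈ T, y ^ h = (-1) ^ j)
    (ha₁ : (a ^ f₁) ^ r = a ^ f₁) (ha₂ : a ^ f₂ ∈ T)
    (hne : a * (derivative (nodalCompPow S f₁ * nodalCompPow T f₂)).eval a ≠ 0) :
    quadraticChar F (a * (derivative (nodalCompPow S f₁ * nodalCompPow T f₂)).eval a) =
      (-1) ^ (h * (T.card - 1)) := by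
  rw [mul_comm (nodalCompPow S f₁)] at hne ⊢
  have hprod := quadraticChar_mul_eval_derivative_nodalCompPow_mul hF hr ha₂ hne
  rw [Ne, ← quadraticChar_eq_zero_iff, hprod] at hne
  simp only [mul_eq_zero, quadraticChar_eq_zero_iff, not_or, eval_nodalCompPow] at hne
  obtain ⟨⟨-, hnode⟩, hother⟩ := hne
  have hsign : (-1 : ℤ) ^ (h + j + j) = (-1) ^ h := by
    rw [add_assoc, pow_add, Even.neg_one_pow (Even.add_self j), mul_one]
  rw [hprod, eval_nodalCompPow, quadraticChar_eval_nodal_eq_one hF hr hS ha₁ hother, mul_one,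
    quadraticChar_eq_one_of_pow_eq_neg_one_pow hF hr (hT _ ha₂), one_mul,
    quadraticChar_eval_nodal hF hr (hT _ ha₂) (fun y hy => hT y (Finset.mem_of_mem_erase hy))
      hnode, Finset.card_erase_of_mem ha₂, pow_mul, hsign, ← pow_mul]

end NodalCompPow

section Construction

open Polynomial

theorem X_pow_sub_C_dvd_X_pow_sub_one {R : Type*} [CommRing R] {c : R} {D m n : ℕ}
    (hc : c ^ m = 1) (h : D * m ∣ n) : (X ^ D - C c : R[X]) ∣ X ^ n - 1 := by
  refine dvd_trans ?_ (dvd_pow_sub_one_of_dvd h)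
  have := sub_dvd_pow_sub_pow (X ^ D) (C c) m
  rwa [← pow_mul, ← C_pow, hc, C_1] at this

theorem pow_eq_self_of_pow_eq_one {M : Type*} [Monoid M] {x : M} {m r : ℕ} (hr : r ≠ 0)
    (hx : x ^ m = 1) (h : m ∣ r - 1) : x ^ r = x := by
  rw [← Nat.sub_one_add_one hr, pow_succ, orderOf_dvd_iff_pow_eq_one.1
    ((orderOf_dvd_of_pow_eq_one hx).trans h), one_mul]

variable {F : Type*} [Field F] [Fintype F] {r D₁ D₂ f₁ f₂ s t κ : ℕ}

theorem exists_nodal_dvd_X_pow_sub_C {c : F} {D m s : ℕ} (hc : c ^ m = 1) (hD : D ≠ 0)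
    (hdvd : D * m ∣ Fintype.card F - 1) (hs : s ≤ D) :
    ∃ S : Finset F, S.card = s ∧ Lagrange.nodal S id ∣ X ^ D - C c :=
  exists_nodal_dvd_of_dvd (monic_X_pow_sub_C c hD) (X_pow_sub_C_dvd_X_pow_sub_one hc hdvd)
    (by rwa [natDegree_X_pow_sub_C])

variable [DecidableEq F]

theorem quadraticChar_mul_eval_derivative_of_isRoot {S T : Finset F} {a : F}
    (hF : Fintype.card F = r ^ 2) (hr : r + 1 = 2 * (D₂ * κ)) (hD₁ : D₁ * 2 ∣ r - 1)
    (hN : D₁ * f₁ = D₂ * f₂) (hS : ∀ x ∈ S, x ^ D₁ = 1) (hT : ∀ y ∈ T, y ^ D₂ = -1)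
    (heven : Even (T.card * κ + D₂ * κ))
    (hdvd : nodalCompPow S f₁ * nodalCompPow T f₂ ∣ X ^ (Fintype.card F - 1) - 1)
    (ha : (nodalCompPow S f₁ * nodalCompPow T f₂).IsRoot a) :
    quadraticChar F (a * (derivative (nodalCompPow S f₁ * nodalCompPow T f₂)).eval a) =
      (-1) ^ (D₂ * κ * (T.card + 1)) := by
  have hr0 : r ≠ 0 := fun h0 => Fintype.card_ne_zero (α := F) (by rw [hF, h0, sq, zero_mul])
  have hne : a * (derivative (nodalCompPow S f₁ * nodalCompPow T f₂)).eval a ≠ 0 :=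
    mul_ne_zero (ne_zero_of_isRoot_of_dvd hdvd ha) (eval_derivative_ne_zero_of_dvd hdvd ha)
  have hSr : ∀ x ∈ S, x ^ r = x := fun x hx =>
    pow_eq_self_of_pow_eq_one hr0 (hS x hx) (dvd_of_mul_right_dvd hD₁)
  have hTh : ∀ y ∈ T, y ^ (D₂ * κ) = (-1) ^ κ := fun y hy => by rw [pow_mul, hT y hy]
  rcases root_mul.1 ha with ha | ha <;> rw [isRoot_nodalCompPow] at ha
  · have ha₂ : (a ^ f₂) ^ (D₂ * κ) = (-1) ^ 0 := by
      rw [pow_mul, ← pow_mul a, mul_comm f₂, ← hN, mul_comm D₁, pow_mul a, hS _ ha, one_pow,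
        pow_zero]
    rw [quadraticChar_mul_eval_derivative_of_pow_mem_left hF hr hSr hTh ha ha₂ hne]
    refine neg_one_pow_congr ?_
    simp only [Nat.even_add, Nat.even_mul, add_zero, Nat.even_add_one] at heven ⊢
    tauto
  · have ha₁ : (a ^ f₁) ^ D₁ = -1 := by
      rw [← pow_mul, mul_comm f₁, hN, mul_comm D₂, pow_mul, hT _ ha]
    have ha₁r : (a ^ f₁) ^ r = a ^ f₁ :=
      pow_eq_self_of_pow_eq_one hr0 (by rw [pow_mul, ha₁, neg_one_sq]) hD₁
    rw [quadraticChar_mul_eval_derivative_of_pow_mem_right hF hr hSr hTh ha₁r ha hne,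
      ← Nat.sub_add_cancel (Finset.card_pos.2 ⟨_, ha⟩), Nat.add_sub_cancel]
    refine neg_one_pow_congr ?_
    simp only [Nat.even_mul, Nat.even_add_one, not_not]

theorem hasSelfOrthogonalMDSCode_of_pow_fibers (hF : Fintype.card F = r ^ 2)
    (hr : r + 1 = 2 * (D₂ * κ)) (hD₁ : D₁ * 2 ∣ r - 1) (hN : D₁ * f₁ = D₂ * f₂)
    (hdvd : D₁ * f₁ * 2 ∣ r ^ 2 - 1) (hs : s ≤ D₁) (ht : t ≤ D₂)
    (heven : Even (t * κ + D₂ * κ)) {k : ℕ} (hk1 : 1 ≤ k) (hk : 2 * k < s * f₁ + t * f₂) :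
    HasSelfOrthogonalMDSCode F (s * f₁ + t * f₂) k := by
  rw [← hF] at hdvd
  have hN0 : D₁ * f₁ ≠ 0 := fun h0 => by
    rw [h0, zero_mul, zero_dvd_iff] at hdvd
    exact (Nat.sub_pos_of_lt (Fintype.one_lt_card (α := F))).ne' hdvd
  obtain ⟨hD₁0, hf₁0⟩ := mul_ne_zero_iff.1 hN0
  obtain ⟨hD₂0, hf₂0⟩ := mul_ne_zero_iff.1 (hN ▸ hN0)
  obtain ⟨S, rfl, hS⟩ := exists_nodal_dvd_X_pow_sub_C (F := F) (one_pow 2) hD₁0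
    (dvd_trans ⟨f₁, by ring⟩ hdvd) hs
  obtain ⟨T, rfl, hT⟩ := exists_nodal_dvd_X_pow_sub_C (F := F) neg_one_sq hD₂0
    (dvd_trans ⟨f₂, by rw [hN]; ring⟩ hdvd) ht
  have hP := nodalCompPow_mul_nodalCompPow_dvd hS hT hN hdvd
  have hmonic := (monic_nodalCompPow (S := S) hf₁0).mul (monic_nodalCompPow (S := T) hf₂0)
  have hdeg : (nodalCompPow S f₁ * nodalCompPow T f₂).natDegree = S.card * f₁ + T.card * f₂ := by
    rw [(monic_nodalCompPow hf₁0).natDegree_mul (monic_nodalCompPow hf₂0),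
      natDegree_nodalCompPow, natDegree_nodalCompPow]
  rw [← hdeg] at hk ⊢
  exact hasSelfOrthogonalMDSCode_natDegree_of_dvd hmonic hP
    (fun a => quadraticChar_mul_eval_derivative_of_isRoot hF hr hD₁ hN
      (fun x => pow_eq_of_mem_of_nodal_dvd hS) (fun y => pow_eq_of_mem_of_nodal_dvd hT) heven hP)
    hk1 hk

end Construction

section Arithmetic

theorem div_gcd_mul_two_dvd {a b m : ℕ} (ha : a ≠ 0) (hm : Even m) (h : 2 * a ∣ b * m) :
    a / a.gcd b * 2 ∣ m := by
  obtain ⟨g, a', b', hg, hcop, rfl, rfl⟩ := Nat.exists_coprime' (m := a) (n := b)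
    (Nat.gcd_pos_of_pos_left b (Nat.pos_of_ne_zero ha))
  rw [Nat.gcd_mul_right, hcop.gcd_eq_one, one_mul, Nat.mul_div_cancel _ hg]
  have h2 : a' * 2 ∣ b' * m := Nat.dvd_of_mul_dvd_mul_right hg (by convert h using 1 <;> ring)
  rcases b'.even_or_odd with hb' | hb'
  · have ha' : Nat.Coprime a' 2 := hcop.coprime_dvd_right hb'.two_dvd
    exact ha'.mul_dvd_of_dvd_of_dvd (hcop.dvd_of_dvd_mul_left (dvd_of_mul_right_dvd h2)) hm.two_dvd
  · exact (hcop.mul_left hb'.coprime_two_left).dvd_of_dvd_mul_left h2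

theorem even_add_of_coprime {t a b κ : ℕ} (hab : a.Coprime b) (h : Even (t * a * κ + b * κ)) :
    Even (t * κ + b * κ) := by
  have not_both_even : ¬ (Even a ∧ Even b) := fun ⟨ha, hb⟩ =>
    Nat.not_coprime_of_dvd_of_dvd one_lt_two ha.two_dvd hb.two_dvd hab
  simp only [Nat.even_add, Nat.even_mul] at h ⊢
  tauto

theorem even_gcd_of_mod_two_pow_succ {a b l : ℕ} (hl : l ≠ 0) (ha : a % 2 ^ (l + 1) = 2 ^ l)
    (hb : 2 ^ l ∣ b) : Even (a.gcd b) := by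
  refine even_iff_two_dvd.2 ((dvd_pow_self 2 hl).trans (Nat.dvd_gcd ?_ hb))
  rw [← Nat.mod_add_div a (2 ^ (l + 1)), ha, pow_succ, mul_assoc]
  exact dvd_add dvd_rfl (dvd_mul_right _ _)

theorem two_mul_dvd_mul_of_mod_two_pow_succ {a b m l : ℕ} (ha : a % 2 ^ (l + 1) = 2 ^ l)
    (hb : 2 ^ l ∣ b) (hm : Even m) (h : a ∣ b * m) : 2 * a ∣ b * m := by
  obtain ⟨c, hc, rfl⟩ : ∃ c, Odd c ∧ a = 2 ^ l * c := ⟨2 * (a / 2 ^ (l + 1)) + 1, ⟨_, rfl⟩, by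
    conv_lhs => rw [← Nat.mod_add_div a (2 ^ (l + 1)), ha]
    ring⟩
  rw [← mul_assoc]
  refine Nat.Coprime.mul_dvd_of_dvd_of_dvd ?_ ?_ (dvd_of_mul_left_dvd h)
  · rw [← pow_succ']
    exact hc.coprime_two_left.pow_left _
  · rw [mul_comm]
    exact mul_dvd_mul hb hm.two_dvd

end Arithmetic

theorem mds_self_orthogonal_thm5_even_length_general {r e1 f1 e2 f2 s t : ℕ}
    (hq1 : r ^ 2 - 1 = e1 * f1) (hq2 : r ^ 2 - 1 = e2 * f2) (hgcd : Even (e1.gcd e2))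
    (hdvd1 : 2 * e2 ∣ e1 * (r + 1)) (hdvd2 : 2 * e1 ∣ e2 * (r - 1))
    (hs : s ≤ e1 / e1.gcd e2) (ht : t ≤ e2 / e1.gcd e2)
    (heven : Even (t * e1 * (r + 1) / (2 * e2) + (r + 1) / 2))
    {F : Type*} [Field F] [Fintype F] [DecidableEq F] (hF : Fintype.card F = r ^ 2)
    {k : ℕ} (hk1 : 1 ≤ k) (hk : 2 * k < s * f1 + t * f2) :
    ∃ C : Submodule F (Fin (s * f1 + t * f2) → F),
      Module.finrank F C = k ∧ C ≤ dualCode C ∧ IsMinDist C (s * f1 + t * f2 - k + 1) := by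
  have hr2 : 1 < r ^ 2 := hF ▸ Fintype.one_lt_card
  have he1 : e1 ≠ 0 := fun h0 => by rw [h0, zero_mul] at hq1; lia
  have he2 : e2 ≠ 0 := fun h0 => by rw [h0, zero_mul] at hq2; lia
  have hr_odd : Odd r := by
    have hsub : Even (r ^ 2 - 1) :=
      hq1 ▸ even_iff_two_dvd.2 ((hgcd.two_dvd.trans (e1.gcd_dvd_left e2)).mul_right f1)
    rwa [Nat.even_sub' hr2.le, iff_true_right odd_one, Nat.odd_pow_iff two_ne_zero] at hsub
  obtain ⟨κ, hκ⟩ := e1.gcd_comm e2 ▸ div_gcd_mul_two_dvd he2 hr_odd.add_one hdvd1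
  have hD₁ := div_gcd_mul_two_dvd he1 (Nat.Odd.sub_odd hr_odd odd_one) hdvd2
  obtain ⟨g, D₁, D₂, hg, hcop, rfl, rfl⟩ := Nat.exists_coprime' (m := e1) (n := e2)
    (Nat.gcd_pos_of_pos_left e2 (Nat.pos_of_ne_zero he1))
  simp only [Nat.gcd_mul_right, hcop.gcd_eq_one, one_mul, Nat.mul_div_cancel _ hg]
    at hgcd hs ht hκ hD₁
  rw [mul_assoc, mul_left_comm] at hκ
  have hquot : t * (D₁ * g) * (r + 1) / (2 * (D₂ * g)) = t * D₁ * κ := by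
    rw [hκ, Nat.div_eq_of_eq_mul_left (Nat.pos_of_ne_zero (mul_ne_zero two_ne_zero he2))]
    ring
  rw [hquot, hκ, Nat.mul_div_cancel_left _ two_pos] at heven
  refine hasSelfOrthogonalMDSCode_of_pow_fibers hF hκ hD₁ (Nat.eq_of_mul_eq_mul_left hg ?_) ?_
    hs ht (even_add_of_coprime hcop heven) hk1 hk
  · rw [← mul_assoc, ← mul_assoc, mul_comm g, mul_comm g, ← hq1, hq2]
  · rw [hq1, mul_right_comm D₁ g]
    exact mul_dvd_mul_left _ hgcd.two_dvd

/-- Theorem 5.2(1): if `(r+1)/2·(t·e₁/e₂ + 1)` and `n₁ = s·f₁ + t·f₂` are even, then for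
`1 ≤ k ≤ n₁/2 − 1` there is a `q`-ary `[n₁, k]` MDS self-orthogonal code, where `q = r²`. -/
theorem mds_self_orthogonal_thm5_even_length
    (r e1 f1 e2 f2 s t l : ℕ)
    (hr_odd : Odd r) (hr_pp : IsPrimePow r)
    (hq1 : r ^ 2 - 1 = e1 * f1) (hq2 : r ^ 2 - 1 = e2 * f2)
    (hl : 2 ≤ l) (he1 : e1 % 2 ^ (l + 1) = 2 ^ l) (he2 : 2 ^ l ∣ e2)
    (hdvd1 : 2 * e2 ∣ e1 * (r + 1)) (hdvd2 : e1 ∣ e2 * (r - 1))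
    (hs1 : 1 ≤ s) (hs2 : s ≤ e1 / Nat.gcd e1 e2)
    (ht1 : 1 ≤ t) (ht2 : t ≤ e2 / Nat.gcd e1 e2)
    (heven : Even (t * e1 * (r + 1) / (2 * e2) + (r + 1) / 2))
    (hn1 : Even (s * f1 + t * f2))
    (F : Type*) [Field F] [Fintype F] [DecidableEq F]
    (hF : Fintype.card F = r ^ 2) :
    ∀ k : ℕ, 1 ≤ k → k ≤ (s * f1 + t * f2) / 2 - 1 →
      ∃ C : Submodule F (Fin (s * f1 + t * f2) → F),
        Module.finrank F C = k ∧
        C ≤ dualCode C ∧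
        IsMinDist C (s * f1 + t * f2 - k + 1) := by
  intro k hk1 hk
  have hr1 : Even (r - 1) := Nat.Odd.sub_odd hr_odd odd_one
  exact mds_self_orthogonal_thm5_even_length_general hq1 hq2
    (even_gcd_of_mod_two_pow_succ (by lia) he1 he2) hdvd1
    (two_mul_dvd_mul_of_mod_two_pow_succ he1 he2 hr1 hdvd2) hs2 ht2 heven hF hk1 (by lia)
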